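/- The map μ defined by the two-phase recursive matching construction is an acyclic partial matching on the face poset P of the independence complex Ind(G_m^d); that is, the set of pairs {(σ, μ(σ)) : σ ∈ S} is a partial matching on P, and there is no cycle μ(σ_1) ≻ σ_1 ≺ μ(σ_2) ≻ σ_2 ≺ … ≺ μ(σ_t) ≻ σ_t ≺ μ(σ_1) with t ≥ 2 and σ_1, …, σ_t distinct elements of S. -/

import Mathlib

open Finset

/-- The graph `G_m^d` on vertex set `Fin m ⊕ Fin m` (0-based indexing):
`Sum.inl i` is the vertex `a_{i+1}` and `Sum.inr j` is the vertex `b_{j+1}` of the paper;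
`a_i` is adjacent to `b_j` iff `(j - i) mod m ∈ {0, …, d-1}`. -/
def Gmd (m d : ℕ) : SimpleGraph (Fin m ⊕ Fin m) :=
  SimpleGraph.fromRel (fun u v =>
    ∃ i j : Fin m, u = Sum.inl i ∧ v = Sum.inr j ∧ (j.val + m - i.val) % m < d)

/-- A finite set of vertices is independent iff no two of its elements are adjacent. -/
def IsInd (m d : ℕ) (σ : Finset (Fin m ⊕ Fin m)) : Prop :=
  ∀ u ∈ σ, ∀ v ∈ σ, ¬ (Gmd m d).Adj u v

/-- The face poset `P` of the independence complex `Ind (G_m^d)` (ordered by `⊆`),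
including the empty simplex. -/
def faceP (m d : ℕ) : Set (Finset (Fin m ⊕ Fin m)) := {σ | IsInd m d σ}

/-- One step of the matching construction: `S_x(T) = {σ ∈ T | x ∉ σ, σ ∪ {x} ∈ T}`. -/
def stepS {α : Type*} [DecidableEq α] (x : α) (T : Set (Finset α)) : Set (Finset α) :=
  {σ | σ ∈ T ∧ x ∉ σ ∧ insert x σ ∈ T}

/-- The survivors of one step: `T \ (S_x(T) ∪ μ_x(S_x(T)))`. -/
def stepSurv {α : Type*} [DecidableEq α] (x : α) (T : Set (Finset α)) : Set (Finset α) :=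
  T \ (stepS x T ∪ (insert x) '' (stepS x T))

/-- Iterating the matching construction along a list of vertices. -/
def phase {α : Type*} [DecidableEq α] (T : Set (Finset α)) (l : List α) : Set (Finset α) :=
  l.foldl (fun T x => stepSurv x T) T

/-- The list `a_1, …, a_m`. -/
def listA (m : ℕ) : List (Fin m ⊕ Fin m) := (List.finRange m).map Sum.inl
/-- The list `b_1, …, b_m`. -/
def listB (m : ℕ) : List (Fin m ⊕ Fin m) := (List.finRange m).map Sum.inr

/-- `S_{a_{i+1}}` (0-based `i`): the set matched with `a_{i+1}` at stage `i+1` of phase one. -/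
def Sa (m d : ℕ) (i : Fin m) : Set (Finset (Fin m ⊕ Fin m)) :=
  stepS (Sum.inl i) (phase (faceP m d) ((listA m).take i.val))

/-- `M = P \ (S_1 ∪ μ_1(S_1))`, the simplices surviving phase one. -/
def setM (m d : ℕ) : Set (Finset (Fin m ⊕ Fin m)) := phase (faceP m d) (listA m)

/-- `S_{b_{i+1}}` (0-based `i`): the set matched with `b_{i+1}` at stage `i+1` of phase two. -/
def Sb (m d : ℕ) (i : Fin m) : Set (Finset (Fin m ⊕ Fin m)) :=
  stepS (Sum.inr i) (phase (setM m d) ((listB m).take i.val))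

/-- `𝒮_{a_{i+1}} = S_{a_{i+1}} ∪ μ_{a_{i+1}}(S_{a_{i+1}})`. -/
def scriptSa (m d : ℕ) (i : Fin m) : Set (Finset (Fin m ⊕ Fin m)) :=
  Sa m d i ∪ (insert (Sum.inl i)) '' (Sa m d i)

/-- `𝒮_{b_{i+1}} = S_{b_{i+1}} ∪ μ_{b_{i+1}}(S_{b_{i+1}})`. -/
def scriptSb (m d : ℕ) (i : Fin m) : Set (Finset (Fin m ⊕ Fin m)) :=
  Sb m d i ∪ (insert (Sum.inr i)) '' (Sb m d i)

/-- The critical cells `C = P \ (S ∪ μ(S))`. -/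
def setC (m d : ℕ) : Set (Finset (Fin m ⊕ Fin m)) :=
  faceP m d \ ((⋃ i : Fin m, scriptSa m d i) ∪ (⋃ i : Fin m, scriptSb m d i))

/-- The matching relation: `MatchRel σ τ` iff `τ = μ(σ)` for `σ ∈ S = S_1 ∪ S_2`. -/
def MatchRel (m d : ℕ) (σ τ : Finset (Fin m ⊕ Fin m)) : Prop :=
  (∃ i : Fin m, σ ∈ Sa m d i ∧ τ = insert (Sum.inl i) σ) ∨
  (∃ i : Fin m, σ ∈ Sb m d i ∧ τ = insert (Sum.inr i) σ)

/-- `B_{s+1} = {b_{s+1}, b_{s+2}, …, b_{s+m-d}}` (0-based `s`, subscripts mod `m`). -/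
def Bset (m d : ℕ) (s : Fin m) : Finset (Fin m ⊕ Fin m) :=
  (Finset.univ.filter (fun j : Fin m => (j.val + m - s.val) % m < m - d)).image Sum.inr

/-- `b_{n+1} ∈ σ` (0-based subscript `n`). -/
def hasB (m : ℕ) (σ : Finset (Fin m ⊕ Fin m)) (n : ℕ) : Prop :=
  ∃ j : Fin m, j.val = n ∧ Sum.inr j ∈ σ

/-- `σ ⊆ B`. -/
def onlyB (m : ℕ) (σ : Finset (Fin m ⊕ Fin m)) : Prop :=
  ∀ v ∈ σ, ∃ j : Fin m, v = Sum.inr j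

/-- Property `P_l` of the paper, with parameter `j1` (0-based: the paper's `j_1 - 1`, so
`1 ≤ j1 ≤ d`).  With 0-based subscripts `i_r = (r-1)(d+1)`, `j_r = j1 + (r-1)(d+1)` and
`k = m + j1 - (d+1)`:  σ ∈ M, σ ⊆ B, the `2l` smallest subscripts of σ are exactly
`0 = i_1, j_1, i_2, j_2, …, i_l, j_l`, the largest subscript is `k`, and
`σ \ {b_{i_r}} ∉ M`, `σ \ {b_{j_r}} ∉ M` for all `1 ≤ r ≤ l`. -/
def propP (m d l j1 : ℕ) (σ : Finset (Fin m ⊕ Fin m)) : Prop :=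
  σ ∈ setM m d ∧ onlyB m σ ∧ 1 ≤ j1 ∧ j1 ≤ d ∧
  (∀ r, 1 ≤ r → r ≤ l → hasB m σ ((r-1)*(d+1)) ∧ hasB m σ (j1 + (r-1)*(d+1))) ∧
  (∀ j : Fin m, Sum.inr j ∈ σ → j.val ≤ j1 + (l-1)*(d+1) →
      ∃ r, 1 ≤ r ∧ r ≤ l ∧ (j.val = (r-1)*(d+1) ∨ j.val = j1 + (r-1)*(d+1))) ∧
  hasB m σ (m + j1 - (d+1)) ∧
  (∀ j : Fin m, Sum.inr j ∈ σ → j.val ≤ m + j1 - (d+1)) ∧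
  (∀ r, 1 ≤ r → r ≤ l → ∀ j : Fin m,
      (j.val = (r-1)*(d+1) ∨ j.val = j1 + (r-1)*(d+1)) → σ.erase (Sum.inr j) ∉ setM m d)

/-!
The two phases form a single run of element matchings along `a_1, …, a_m, b_1, …, b_m`, and such
a run is acyclic along any finite list of vertices in any family of finite sets. Indeed, take an
infinite alternating path `μ(σ_0) ≻ σ_1, μ(σ_1) ≻ σ_2, …` of matched sets, with consecutive `σ_n`
distinct, and let `v` be the first vertex of the list. If `v` is used to match some `σ_k`, then
`v ∈ σ_{k+1}`, since otherwise `σ_{k+1} = σ_k`. From then on `v` stays: a step from `σ_n ∋ v` to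
`σ_{n+1} ∌ v` would make `μ(σ_n) = σ_{n+1} ∪ {v}` a set already matched by `v`. So a tail of the
path uses only the later vertices, and induction on the list rules it out. A cycle unrolls to
such an infinite path.
-/

theorem covBy_iff_subset_and_card {α : Type*} {s t : Finset α} :
    s ⋖ t ↔ s ⊆ t ∧ t.card = s.card + 1 := by
  classical
  rw [covBy_iff_card_sdiff_eq_one, and_congr_right_iff]
  intro h
  rw [card_sdiff_of_subset h, Nat.sub_eq_iff_eq_add' (card_le_card h)]

section

variable {α : Type*} [DecidableEq α] {T : Set (Finset α)} {v : α} {l : List α}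
  {σ τ ρ σ₁ σ₂ τ₁ τ₂ : Finset α}

theorem notMem_stepSurv_of_mem_stepS (h : σ ∈ stepS v T) : σ ∉ stepSurv v T :=
  fun hσ => hσ.2 (Or.inl h)

theorem insert_notMem_stepSurv (h : σ ∈ stepS v T) : insert v σ ∉ stepSurv v T :=
  fun hσ => hσ.2 (Or.inr ⟨σ, h, rfl⟩)

theorem eq_of_insert_eq_insert (hσ₁ : v ∉ σ₁) (hσ₂ : v ∉ σ₂) (h : insert v σ₁ = insert v σ₂) :
    σ₁ = σ₂ := by
  rw [← erase_insert hσ₁, h, erase_insert hσ₂]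

theorem insert_eq_of_covBy (h : σ ⋖ τ) (hτ : v ∈ τ) (hσ : v ∉ σ) : insert v σ = τ :=
  (h.eq_or_eq (subset_insert v σ) (insert_subset hτ h.le)).resolve_left
    (insert_ne_self.mpr hσ)

theorem mem_of_covBy_of_mem_stepSurv (hσ : σ ∈ T) (hτ : τ ∈ stepSurv v T) (h : σ ⋖ τ)
    (hv : v ∈ τ) : v ∈ σ := by
  by_contra hvσ
  obtain rfl := insert_eq_of_covBy h hv hvσ
  exact insert_notMem_stepSurv ⟨hσ, hvσ, hτ.1⟩ hτ

/-- The sequence of element matchings along a list: `ElementMatch T l σ τ` says that, when the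
vertices of `l` are processed in order starting from the family `T`, some `v` in `l` matches `σ`
with `τ = σ ∪ {v}` among the sets left unmatched by the vertices before it. -/
def ElementMatch : Set (Finset α) → List α → Finset α → Finset α → Prop
  | _, [], _, _ => False
  | T, v :: l, σ, τ => σ ∈ stepS v T ∧ τ = insert v σ ∨ ElementMatch (stepSurv v T) l σ τ

namespace ElementMatch

theorem left_mem (h : ElementMatch T l σ τ) : σ ∈ T := by
  induction l generalizing T with
  | nil => exact h.elim
  | cons v l ih =>
    rcases h with ⟨h, -⟩ | h
    · exact h.1
    · exact (ih h).1

theorem right_mem (h : ElementMatch T l σ τ) : τ ∈ T := by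
  induction l generalizing T with
  | nil => exact h.elim
  | cons v l ih =>
    rcases h with ⟨h, rfl⟩ | h
    · exact h.2.2
    · exact (ih h).1

theorem covBy (h : ElementMatch T l σ τ) : σ ⋖ τ := by
  induction l generalizing T with
  | nil => exact h.elim
  | cons v l ih =>
    rcases h with ⟨h, rfl⟩ | h
    · exact covBy_insert h.2.1
    · exact ih h

theorem right_unique (h₁ : ElementMatch T l σ τ₁) (h₂ : ElementMatch T l σ τ₂) : τ₁ = τ₂ := by
  induction l generalizing T with
  | nil => exact h₁.elim
  | cons v l ih =>
    rcases h₁ with ⟨h₁, rfl⟩ | h₁ <;> rcases h₂ with ⟨h₂, rfl⟩ | h₂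
    · rfl
    · exact absurd h₂.left_mem (notMem_stepSurv_of_mem_stepS h₁)
    · exact absurd h₁.left_mem (notMem_stepSurv_of_mem_stepS h₂)
    · exact ih h₁ h₂

theorem left_unique (h₁ : ElementMatch T l σ₁ τ) (h₂ : ElementMatch T l σ₂ τ) : σ₁ = σ₂ := by
  induction l generalizing T with
  | nil => exact h₁.elim
  | cons v l ih =>
    rcases h₁ with ⟨h₁, rfl⟩ | h₁ <;> rcases h₂ with ⟨h₂, h⟩ | h₂
    · exact eq_of_insert_eq_insert h₁.2.1 h₂.2.1 h
    · exact absurd h₂.right_mem (insert_notMem_stepSurv h₁)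
    · exact absurd (h ▸ h₁.right_mem) (insert_notMem_stepSurv h₂)
    · exact ih h₁ h₂

theorem not_elementMatch_right (h₁ : ElementMatch T l σ τ) : ¬ ElementMatch T l τ ρ := by
  intro h₂
  induction l generalizing T with
  | nil => exact h₁
  | cons v l ih =>
    rcases h₁ with ⟨h₁, rfl⟩ | h₁ <;> rcases h₂ with ⟨h₂, -⟩ | h₂
    · exact h₂.2.1 (mem_insert_self v σ)
    · exact insert_notMem_stepSurv h₁ h₂.left_mem
    · exact notMem_stepSurv_of_mem_stepS h₂ h₁.right_mem
    · exact ih h₁ h₂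

theorem tail_of_mem (h : ElementMatch T (v :: l) σ τ) (hv : v ∈ σ) :
    ElementMatch (stepSurv v T) l σ τ :=
  h.resolve_left fun hσ => hσ.1.2.1 hv

theorem mem_of_covBy (h : ElementMatch T (v :: l) σ τ) (hρ : ρ ∈ T) (hρτ : ρ ⋖ τ)
    (hv : v ∈ σ) : v ∈ ρ :=
  mem_of_covBy_of_mem_stepSurv hρ (h.tail_of_mem hv).right_mem hρτ (h.covBy.le hv)

theorem exists_succ_eq {x y : ℕ → Finset α} (hm : ∀ n, ElementMatch T l (x n) (y n))
    (hc : ∀ n, x (n + 1) ⋖ y n) : ∃ n, x (n + 1) = x n := by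
  induction l generalizing T x y with
  | nil => exact (hm 0).elim
  | cons v l ih =>
    by_cases htail : ∀ n, ElementMatch (stepSurv v T) l (x n) (y n)
    · exact ih htail hc
    obtain ⟨k, hk⟩ := not_forall.mp htail
    obtain ⟨⟨-, hvk, -⟩, hyk⟩ := (hm k).resolve_right hk
    by_cases hv : v ∈ x (k + 1)
    · have hmem (n : ℕ) : v ∈ x (k + 1 + n) := by
        induction n with
        | zero => exact hv
        | succ n ihn => exact (hm _).mem_of_covBy (hm _).left_mem (hc _) ihn
      obtain ⟨n, hn⟩ := ih (fun n => (hm (k + 1 + n)).tail_of_mem (hmem n)) (fun n => hc _)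
      exact ⟨k + 1 + n, hn⟩
    · have hins : insert v (x (k + 1)) = y k :=
        insert_eq_of_covBy (hc k) (hyk ▸ mem_insert_self v (x k)) hv
      exact ⟨k, eq_of_insert_eq_insert hv hvk (hins.trans hyk)⟩

theorem exists_add_one_eq {t : ℕ} {x y : ZMod t → Finset α}
    (hm : ∀ i, ElementMatch T l (x i) (y i)) (hc : ∀ i, x (i + 1) ⋖ y i) :
    ∃ i, x (i + 1) = x i := by
  obtain ⟨n, hn⟩ := exists_succ_eq (x := fun n : ℕ => x n) (fun n => hm n)
    (fun n => by simpa only [Nat.cast_succ] using hc n)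
  exact ⟨n, by simpa only [Nat.cast_succ] using hn⟩

end ElementMatch

theorem elementMatch_append {l₁ l₂ : List α} :
    ElementMatch T (l₁ ++ l₂) σ τ ↔
      ElementMatch T l₁ σ τ ∨ ElementMatch (phase T l₁) l₂ σ τ := by
  induction l₁ generalizing T with
  | nil => exact (iff_of_eq (false_or _)).symm
  | cons v l₁ ih => exact (or_congr_right ih).trans or_assoc.symm

theorem elementMatch_iff_exists_getElem :
    ElementMatch T l σ τ ↔
      ∃ (i : ℕ) (hi : i < l.length),
        σ ∈ stepS l[i] (phase T (l.take i)) ∧ τ = insert l[i] σ := by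
  induction l generalizing T with
  | nil => simp [ElementMatch]
  | cons v l ih =>
    refine Iff.trans ?_ Nat.or_exists_add_one
    simp [ElementMatch, ih, phase]

theorem elementMatch_map_finRange {m : ℕ} {f : Fin m → α} :
    ElementMatch T ((List.finRange m).map f) σ τ ↔
      ∃ i : Fin m, σ ∈ stepS (f i) (phase T (((List.finRange m).map f).take i)) ∧
        τ = insert (f i) σ := by
  simp [elementMatch_iff_exists_getElem, Fin.exists_iff]

end

theorem matchRel_eq (m d : ℕ) :
    MatchRel m d = ElementMatch (faceP m d) (listA m ++ listB m) := by
  ext σ τ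
  rw [elementMatch_append, listA, listB, elementMatch_map_finRange, elementMatch_map_finRange]
  rfl

theorem stmt0_general {α : Type*} [DecidableEq α] (T : Set (Finset α)) (l : List α) :
    (∀ σ τ : Finset α, ElementMatch T l σ τ →
        σ ∈ T ∧ τ ∈ T ∧ σ ⊆ τ ∧ τ.card = σ.card + 1) ∧
    (∀ σ τ₁ τ₂ : Finset α, ElementMatch T l σ τ₁ → ElementMatch T l σ τ₂ → τ₁ = τ₂) ∧
    (∀ σ₁ σ₂ τ : Finset α, ElementMatch T l σ₁ τ → ElementMatch T l σ₂ τ → σ₁ = σ₂) ∧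
    (∀ σ τ ρ : Finset α, ElementMatch T l σ τ → ¬ ElementMatch T l τ ρ) ∧
    ¬ ∃ (t : ℕ) (x τ : ZMod t → Finset α),
        2 ≤ t ∧ Function.Injective x ∧
        ∀ i : ZMod t, ElementMatch T l (x i) (τ i) ∧
          x (i + 1) ⊆ τ i ∧ (τ i).card = (x (i + 1)).card + 1 := by
  refine ⟨fun σ τ h => ⟨h.left_mem, h.right_mem, covBy_iff_subset_and_card.mp h.covBy⟩,
    fun _ _ _ => ElementMatch.right_unique, fun _ _ _ => ElementMatch.left_unique,
    fun _ _ _ => ElementMatch.not_elementMatch_right, ?_⟩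
  rintro ⟨t, x, τ, ht, hinj, hx⟩
  have : Fact (1 < t) := ⟨ht⟩
  obtain ⟨i, hi⟩ := ElementMatch.exists_add_one_eq (fun i => (hx i).1)
    fun i => covBy_iff_subset_and_card.mpr (hx i).2
  exact add_ne_left.mpr one_ne_zero (hinj hi)

/-- the map `μ` of the two-phase construction is an acyclic partial matching on
the face poset `P` of `Ind(G_m^d)`: matched pairs are covering pairs of `P`, every element of
`P` lies in at most one pair, and there is no cycle
`μ(σ_1) ≻ σ_2, μ(σ_2) ≻ σ_3, …, μ(σ_t) ≻ σ_1` with `t ≥ 2` and `σ_1, …, σ_t` distinct. -/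
theorem stmt0 (m d : ℕ) (hd : 1 ≤ d) (hdm : d ≤ m) :
    (∀ σ τ : Finset (Fin m ⊕ Fin m), MatchRel m d σ τ →
        σ ∈ faceP m d ∧ τ ∈ faceP m d ∧ σ ⊆ τ ∧ τ.card = σ.card + 1) ∧
    (∀ σ τ₁ τ₂ : Finset (Fin m ⊕ Fin m),
        MatchRel m d σ τ₁ → MatchRel m d σ τ₂ → τ₁ = τ₂) ∧
    (∀ σ₁ σ₂ τ : Finset (Fin m ⊕ Fin m),
        MatchRel m d σ₁ τ → MatchRel m d σ₂ τ → σ₁ = σ₂) ∧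
    (∀ σ τ ρ : Finset (Fin m ⊕ Fin m), MatchRel m d σ τ → ¬ MatchRel m d τ ρ) ∧
    ¬ ∃ (t : ℕ) (x τ : ZMod t → Finset (Fin m ⊕ Fin m)),
        2 ≤ t ∧ Function.Injective x ∧
        ∀ i : ZMod t, MatchRel m d (x i) (τ i) ∧
          x (i + 1) ⊆ τ i ∧ (τ i).card = (x (i + 1)).card + 1 :=
  matchRel_eq m d ▸ stmt0_general (faceP m d) (listA m ++ listB m)
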